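/- (Theorem 6.7, mirror symmetry in 3-space.) Let G be a finite simple graph with |E| = 3|V| − 6, let s ∈ O(3) be a reflection (an orthogonal involution of ℝ³ whose fixed subspace is 2-dimensional), S = {I, s}, and let Φ : S → Aut(G) be a homomorphism with j_s > b_s, where j_s is the number of vertices fixed by Φ(s) and b_s is the number of edges fixed setwise by Φ(s). Let (G,p) be an S-symmetric framework of type Φ in ℝ³ whose points p_i affinely span ℝ³ and which admits no nonzero fully (S,Φ)-symmetric self-stress (this last hypothesis playing the role of the paper's '(S,Φ)-generic' assumption, as licensed by Remark 6.2). Then (G,p) has a finite flex preserving the symmetry throughout the path. -/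

import Mathlib

open scoped Classical

noncomputable section

abbrev Euc (d : ℕ) : Type := EuclideanSpace ℝ (Fin d)

/-- The subspace of points of `ℝ^d` fixed by a linear isometry (orthogonal transformation). -/
def fixedSpace {d : ℕ} (x : Euc d ≃ₗᵢ[ℝ] Euc d) : Submodule ℝ (Euc d) :=
  LinearMap.ker (x.toLinearEquiv.toLinearMap - LinearMap.id)

/-!
Let `U` be the space of symmetric configurations and `W` the space of symmetric functions on the
edges. The bilinear map `(p, u) ↦ (⟪p i - p j, u i - u j⟫)` over the edges `s(i, j)` restricts to
`B : U × U → W`; `B p` is the symmetric part of the rigidity map, and `B q q` is the vector of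
squared edge lengths of `q`.

Both spaces are fixed spaces of involutions, so traces give `2 dim W = |E| + b` and
`2 dim U = d |V| + j tr C`, for `b` fixed edges and `j` fixed vertices. The symmetric trivial
motions are `x ↦ A x + c` with `A` skew commuting with `C` and `C c = c`; if `C` has eigenvalues
`1, -1` with multiplicities `f, g`, they form a space of dimension at most
`choose (f + 1) 2 + choose g 2`. For a mirror in `ℝ³` this is `3`, while the kernel of `B p` has
dimension at least `3 + (j - b) / 2 > 3`. Hence some `u ∈ U` is a nontrivial infinitesimal motion.
Averaging over the group shows that a symmetric `ω` orthogonal to the range of `B p` is a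
self-stress, so `B p : U → W` is onto and the implicit function theorem in `U` integrates `u` to a
curve of symmetric configurations with constant edge lengths, along which some distance has nonzero
derivative at `p`.
-/

open Module Function Filter Topology Finset
open scoped RealInnerProductSpace

section Involution

variable {M : Type*} [AddCommGroup M] [Module ℝ M] {T : M →ₗ[ℝ] M}

theorem add_apply_mem_eigenspace_one (hT : Involutive T) (x : M) :
    x + T x ∈ End.eigenspace T 1 := by
  rw [End.mem_eigenspace_iff, map_add, hT x, one_smul, add_comm]

theorem sub_apply_mem_eigenspace_neg_one (hT : Involutive T) (x : M) :
    x - T x ∈ End.eigenspace T (-1) := by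
  rw [End.mem_eigenspace_iff, map_sub, hT x, neg_one_smul, neg_sub]

theorem isProj_eigenspace_one_half_id_add (hT : Involutive T) :
    LinearMap.IsProj (End.eigenspace T 1) ((1 / 2 : ℝ) • (LinearMap.id + T)) where
  map_mem x := Submodule.smul_mem _ _ (add_apply_mem_eigenspace_one hT x)
  map_id x hx := by
    have hTx : T x = x := by simpa using End.mem_eigenspace_iff.1 hx
    simp only [LinearMap.smul_apply, LinearMap.add_apply, LinearMap.id_apply, hTx]
    module

variable [FiniteDimensional ℝ M]

theorem two_mul_finrank_eigenspace_one (hT : Involutive T) :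
    2 * (finrank ℝ (End.eigenspace T 1) : ℝ) = finrank ℝ M + LinearMap.trace ℝ M T := by
  rw [← (isProj_eigenspace_one_half_id_add hT).trace, map_smul, map_add, LinearMap.trace_id,
    smul_eq_mul]
  ring

theorem two_mul_finrank_eigenspace_neg_one (hT : Involutive T) :
    2 * (finrank ℝ (End.eigenspace T (-1)) : ℝ) = finrank ℝ M - LinearMap.trace ℝ M T := by
  have heq : End.eigenspace T (-1) = End.eigenspace (-T) 1 := by
    ext x
    simp only [End.mem_eigenspace_iff, LinearMap.neg_apply, neg_one_smul, one_smul,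
      neg_eq_iff_eq_neg]
  have hneg : Involutive (-T) := fun x ↦ by simp [hT x]
  rw [heq, two_mul_finrank_eigenspace_one hneg, map_neg, sub_eq_add_neg]

theorem finrank_eigenspace_one_add_finrank_eigenspace_neg_one (hT : Involutive T) :
    finrank ℝ (End.eigenspace T 1) + finrank ℝ (End.eigenspace T (-1)) = finrank ℝ M := by
  have hsum : (finrank ℝ (End.eigenspace T 1) + finrank ℝ (End.eigenspace T (-1)) : ℝ) =
      finrank ℝ M := by
    linarith [two_mul_finrank_eigenspace_one hT, two_mul_finrank_eigenspace_neg_one hT]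
  exact_mod_cast hsum

theorem trace_eq_finrank_eigenspace_one_sub (hT : Involutive T) :
    LinearMap.trace ℝ M T =
      finrank ℝ (End.eigenspace T 1) - finrank ℝ (End.eigenspace T (-1)) := by
  linarith [two_mul_finrank_eigenspace_one hT, two_mul_finrank_eigenspace_neg_one hT]

end Involution

section SymmetricMaps

variable {ι E : Type*} [AddCommGroup E] [Module ℝ E]

/-- The operator `q ↦ C ∘ q ∘ σ` on maps `ι → E`, by which a symmetry acts on configurations and
on functions on edges. -/
def twist (σ : ι → ι) (C : E →ₗ[ℝ] E) : (ι → E) →ₗ[ℝ] ι → E :=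
  C.compLeft ι ∘ₗ LinearMap.funLeft ℝ E σ

variable {σ : ι → ι} {C : E →ₗ[ℝ] E} {q : ι → E}

@[simp]
theorem twist_apply (σ : ι → ι) (C : E →ₗ[ℝ] E) (q : ι → E) (i : ι) :
    twist σ C q i = C (q (σ i)) := rfl

theorem twist_involutive (hσ : Involutive σ) (hC : Involutive C) : Involutive (twist σ C) := by
  intro q
  ext i
  simp only [twist_apply, hσ i, hC (q i)]

/-- The maps `q : ι → E` intertwining the involutions `σ` of `ι` and `C` of `E`, as the fixed
space of `twist σ C`. For vertices it is the space of symmetric configurations, and for edges,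
with `C = id`, that of fully symmetric stresses. -/
def symmetricMaps (σ : ι → ι) (C : E →ₗ[ℝ] E) : Submodule ℝ (ι → E) :=
  End.eigenspace (twist σ C) 1

theorem mem_symmetricMaps_iff_twist_eq : q ∈ symmetricMaps σ C ↔ twist σ C q = q := by
  rw [symmetricMaps, End.mem_eigenspace_iff, one_smul]

theorem mem_symmetricMaps_iff (hσ : Involutive σ) :
    q ∈ symmetricMaps σ C ↔ ∀ i, C (q i) = q (σ i) := by
  simp only [mem_symmetricMaps_iff_twist_eq, funext_iff, twist_apply]
  refine ⟨fun h i ↦ by rw [← h (σ i), hσ i], fun h i ↦ by rw [h, hσ i]⟩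

theorem add_twist_mem_symmetricMaps (hσ : Involutive σ) (hC : Involutive C) (q : ι → E) :
    q + twist σ C q ∈ symmetricMaps σ C :=
  add_apply_mem_eigenspace_one (twist_involutive hσ hC) q

variable [Fintype ι] [DecidableEq ι] [FiniteDimensional ℝ E]

theorem trace_pi_eq_sum_trace (f : (ι → E) →ₗ[ℝ] ι → E) :
    LinearMap.trace ℝ (ι → E) f =
      ∑ i, LinearMap.trace ℝ E (LinearMap.proj i ∘ₗ f ∘ₗ LinearMap.single ℝ (fun _ ↦ E) i) := by
  have hsum : f = ∑ i, LinearMap.single ℝ (fun _ ↦ E) i ∘ₗ LinearMap.proj i ∘ₗ f := by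
    ext q j
    simp [Pi.single_apply]
  conv_lhs => rw [hsum, map_sum]
  exact sum_congr rfl fun i _ ↦ LinearMap.trace_comp_comm' _ _

theorem trace_twist (σ : ι → ι) (C : E →ₗ[ℝ] E) :
    LinearMap.trace ℝ (ι → E) (twist σ C) = #{i | σ i = i} * LinearMap.trace ℝ E C := by
  have hblock (i : ι) :
      LinearMap.proj i ∘ₗ twist σ C ∘ₗ LinearMap.single ℝ (fun _ ↦ E) i =
        if σ i = i then C else 0 := by
    ext x
    split_ifs with h <;> simp [h]
  simp only [trace_pi_eq_sum_trace, hblock, apply_ite (LinearMap.trace ℝ E), map_zero, sum_ite,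
    sum_const, nsmul_eq_mul, mul_zero, add_zero]

theorem two_mul_finrank_symmetricMaps (hσ : Involutive σ) (hC : Involutive C) :
    2 * (finrank ℝ (symmetricMaps σ C) : ℝ) =
      Fintype.card ι * finrank ℝ E + #{i | σ i = i} * LinearMap.trace ℝ E C := by
  rw [symmetricMaps, two_mul_finrank_eigenspace_one (twist_involutive hσ hC), trace_twist,
    Module.finrank_pi_fintype, sum_const, card_univ, smul_eq_mul, Nat.cast_mul]

end SymmetricMaps

section Skew

variable {E ι : Type*} [NormedAddCommGroup E] [InnerProductSpace ℝ E]

theorem inner_map_add_inner_map_eq_zero {A : E →ₗ[ℝ] E} (hA : ∀ x, ⟪x, A x⟫ = 0) (x y : E) :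
    ⟪x, A y⟫ + ⟪y, A x⟫ = 0 := by
  have hxy := hA (x + y)
  simp only [map_add, inner_add_left, inner_add_right, hA] at hxy
  linarith

theorem exists_skew_map_of_inner_add_inner_eq_zero {x y : ι → E}
    (hx : Submodule.span ℝ (Set.range x) = ⊤) (hxy : ∀ i j, ⟪x i, y j⟫ + ⟪x j, y i⟫ = 0) :
    ∃ A : E →ₗ[ℝ] E, (∀ v, ⟪v, A v⟫ = 0) ∧ ∀ i, A (x i) = y i := by
  let X := Finsupp.linearCombination ℝ x
  let Y := Finsupp.linearCombination ℝ y
  have hXY : (innerₗ E).compl₁₂ X Y = -((innerₗ E).compl₁₂ X Y).flip := by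
    ext i j
    simpa [X, Y] using eq_neg_of_add_eq_zero_left (hxy i j)
  have hskew (a b) : ⟪X a, Y b⟫ = -⟪X b, Y a⟫ := by
    simpa using LinearMap.congr_fun₂ hXY a b
  obtain ⟨g, hg⟩ := X.exists_rightInverse_of_surjective
    ((Finsupp.range_linearCombination ℝ).trans hx)
  have hXg (v) : X (g v) = v := LinearMap.congr_fun hg v
  refine ⟨Y ∘ₗ g, fun v ↦ ?_, fun i ↦ ext_inner_left ℝ fun v ↦ ?_⟩
  · have := hskew (g v) (g v)
    rw [hXg] at this
    simp only [LinearMap.comp_apply]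
    linarith
  · have hXi : X (Finsupp.single i 1) = x i := by simp [X]
    have hYi : Y (Finsupp.single i 1) = y i := by simp [Y]
    calc ⟪v, Y (g (x i))⟫ = ⟪X (g v), Y (g (x i))⟫ := by rw [hXg]
      _ = -⟪X (Finsupp.single i 1), Y (g v)⟫ := by rw [hskew, hXg, hXi]
      _ = ⟪v, y i⟫ := by rw [← hskew, hXg, hYi]

/-- The infinitesimal rotations of `E` (skew-adjoint endomorphisms) that commute with `C`. -/
def commutingSkewMaps (C : E →ₗ[ℝ] E) : Submodule ℝ (E →ₗ[ℝ] E) where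
  carrier := {A | (∀ x, ⟪x, A x⟫ = 0) ∧ ∀ x, A (C x) = C (A x)}
  zero_mem' := by simp
  add_mem' hA hB := ⟨fun x ↦ by simp [inner_add_right, hA.1, hB.1], fun x ↦ by simp [hA.2, hB.2]⟩
  smul_mem' c A hA := ⟨fun x ↦ by simp [inner_smul_right, hA.1], fun x ↦ by simp [hA.2]⟩

/-- The entries above the diagonal of the bilinear form `⟪·, A ·⟫` restricted to `K`, in a basis
of `K`; the index `⟨j, i⟩ : Σ j : Fin n, Fin j` stands for the pair `i < j`. -/
def upperEntries (K : Submodule ℝ E) [FiniteDimensional ℝ K] :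
    (E →ₗ[ℝ] E) →ₗ[ℝ] ((Σ j : Fin (finrank ℝ K), Fin j) → ℝ) :=
  LinearMap.pi fun ij ↦ innerₗ E (finBasis ℝ K (ij.2.castLT (ij.2.2.trans ij.1.2))) ∘ₗ
    LinearMap.applyₗ (finBasis ℝ K ij.1 : E)

theorem finrank_upperEntries_codomain (n : ℕ) :
    finrank ℝ ((Σ j : Fin n, Fin j) → ℝ) = n.choose 2 := by
  rw [finrank_fintype_fun_eq_card, Fintype.card_sigma]
  simp only [Fintype.card_fin, Fin.sum_univ_eq_sum_range (fun j ↦ j), sum_range_id,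
    Nat.choose_two_right]

theorem inner_map_eq_zero_of_upperEntries_eq_zero {K : Submodule ℝ E} [FiniteDimensional ℝ K]
    {A : E →ₗ[ℝ] E} (hA : ∀ x, ⟪x, A x⟫ = 0) (hK : upperEntries K A = 0) {x y : E}
    (hx : x ∈ K) (hy : y ∈ K) : ⟪x, A y⟫ = 0 := by
  let e := finBasis ℝ K
  have hlt {i j} (hij : i < j) : ⟪(e i : E), A (e j)⟫ = 0 := congrFun hK ⟨j, ⟨i, hij⟩⟩
  have hform : (innerₗ E).compl₁₂ K.subtype (A ∘ₗ K.subtype) = 0 := by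
    refine LinearMap.ext_basis e e fun i j ↦ ?_
    rcases lt_trichotomy i j with hij | rfl | hij
    · exact hlt hij
    · exact hA _
    · simpa [hlt hij] using inner_map_add_inner_map_eq_zero hA (e i : E) (e j)
  exact LinearMap.congr_fun₂ hform ⟨x, hx⟩ ⟨y, hy⟩

theorem eq_zero_of_upperEntries_eigenspace_eq_zero {C : E →ₗᵢ[ℝ] E} (hC : Involutive C)
    [FiniteDimensional ℝ E] {A : E →ₗ[ℝ] E} (hA : A ∈ commutingSkewMaps C.toLinearMap)
    (hpos : upperEntries (End.eigenspace C.toLinearMap 1) A = 0)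
    (hneg : upperEntries (End.eigenspace C.toLinearMap (-1)) A = 0) : A = 0 := by
  have hmixed {x y : E} (hx : x ∈ End.eigenspace C.toLinearMap 1)
      (hy : y ∈ End.eigenspace C.toLinearMap (-1)) : ⟪x, A y⟫ = 0 := by
    rw [End.mem_eigenspace_iff] at hx hy
    have hflip : ⟪x, A y⟫ = -⟪x, A y⟫ := calc
      ⟪x, A y⟫ = ⟪C.toLinearMap x, C.toLinearMap (A y)⟫ := (C.inner_map_map _ _).symm
      _ = -⟪x, A y⟫ := by
        rw [← hA.2, hx, hy, one_smul, map_smul, real_inner_smul_right, neg_one_mul]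
    linarith
  have hpos_mem := add_apply_mem_eigenspace_one (T := C.toLinearMap) hC
  have hneg_mem := sub_apply_mem_eigenspace_neg_one (T := C.toLinearMap) hC
  ext y
  refine ext_inner_left ℝ fun x ↦ ?_
  have hpp := inner_map_eq_zero_of_upperEntries_eq_zero hA.1 hpos (hpos_mem x) (hpos_mem y)
  have hnn := inner_map_eq_zero_of_upperEntries_eq_zero hA.1 hneg (hneg_mem x) (hneg_mem y)
  have hpn := hmixed (hpos_mem x) (hneg_mem y)
  have hnp := inner_map_add_inner_map_eq_zero hA.1 (x - C.toLinearMap x) (y + C.toLinearMap y)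
  rw [hmixed (hpos_mem y) (hneg_mem x), add_zero] at hnp
  simp only [map_add, map_sub, inner_add_left, inner_sub_left, inner_add_right,
    inner_sub_right] at hpp hpn hnp hnn
  rw [LinearMap.zero_apply, inner_zero_right]
  linarith

theorem finrank_commutingSkewMaps_le [FiniteDimensional ℝ E] {C : E →ₗᵢ[ℝ] E}
    (hC : Involutive C) :
    finrank ℝ (commutingSkewMaps C.toLinearMap) ≤
      (finrank ℝ (End.eigenspace C.toLinearMap 1)).choose 2 +
        (finrank ℝ (End.eigenspace C.toLinearMap (-1))).choose 2 := by
  let entries := ((upperEntries (End.eigenspace C.toLinearMap 1)).prod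
    (upperEntries (End.eigenspace C.toLinearMap (-1)))).domRestrict
      (commutingSkewMaps C.toLinearMap)
  have hinj : Injective entries := by
    refine LinearMap.ker_eq_bot.1 (LinearMap.ker_eq_bot'.2 fun A hA ↦ Subtype.ext ?_)
    exact eq_zero_of_upperEntries_eigenspace_eq_zero hC A.2
      (congrArg Prod.fst hA) (congrArg Prod.snd hA)
  simpa only [finrank_prod, finrank_upperEntries_codomain] using
    LinearMap.finrank_le_finrank_of_injective hinj

end Skew

section Rigidity

variable {V E : Type*} [NormedAddCommGroup E] [InnerProductSpace ℝ E]

/-- The symmetric bilinear form `⟪p i - p j, u i - u j⟫` attached to the unordered pair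
`e = s(i, j)`. -/
def edgeForm (e : Sym2 V) : (V → E) →ₗ[ℝ] (V → E) →ₗ[ℝ] ℝ :=
  let diffInner (p u : V → E) : Sym2 V → ℝ := Sym2.lift ⟨fun i j ↦ ⟪p i - p j, u i - u j⟫,
    fun i j ↦ by simpa only [neg_sub] using inner_neg_neg (p j - p i) (u j - u i)⟩
  LinearMap.mk₂ ℝ (fun p u ↦ diffInner p u e)
    (fun p q u ↦ e.ind fun i j ↦ by simp [diffInner, add_sub_add_comm, inner_add_left])
    (fun c p u ↦ e.ind fun i j ↦ by simp [diffInner, ← smul_sub, real_inner_smul_left])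
    (fun p u v ↦ e.ind fun i j ↦ by simp [diffInner, add_sub_add_comm, inner_add_right])
    (fun c p u ↦ e.ind fun i j ↦ by simp [diffInner, ← smul_sub, real_inner_smul_right])

@[simp]
theorem edgeForm_mk (i j : V) (p u : V → E) :
    edgeForm s(i, j) p u = ⟪p i - p j, u i - u j⟫ := rfl

theorem edgeForm_comm (e : Sym2 V) (p u : V → E) : edgeForm e p u = edgeForm e u p := by
  induction e with
  | _ i j => simp only [edgeForm_mk, real_inner_comm]

theorem edgeForm_twist (σ : V → V) (C : E →ₗᵢ[ℝ] E) (e : Sym2 V) (p u : V → E) :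
    edgeForm e (twist σ C.toLinearMap p) (twist σ C.toLinearMap u) = edgeForm (e.map σ) p u := by
  induction e with
  | _ i j => simp [← map_sub]

theorem edgeForm_single_eq_zero [DecidableEq V] {e : Sym2 V} {i : V} (hi : i ∉ e) (p : V → E)
    (v : E) : edgeForm e p (Pi.single i v) = 0 := by
  induction e with
  | _ a b =>
    obtain ⟨ha, hb⟩ : i ≠ a ∧ i ≠ b := by simpa using hi
    simp [ha, hb]

variable (G : SimpleGraph V)

/-- The rigidity matrix of `(G, p)` applied to `u`, as a bilinear map in `p` and `u`. On the
diagonal it gives the squared edge lengths. -/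
def rigidityForm : (V → E) →ₗ[ℝ] (V → E) →ₗ[ℝ] (G.edgeSet → ℝ) :=
  LinearMap.mk₂ ℝ (fun p u e ↦ edgeForm e p u) (by intros; ext; simp) (by intros; ext; simp)
    (by intros; ext; simp) (by intros; ext; simp)

theorem rigidityForm_self_mk (q : V → E) {i j : V} (hij : G.Adj i j) :
    rigidityForm G q q ⟨s(i, j), hij⟩ = ‖q i - q j‖ ^ 2 :=
  real_inner_self_eq_norm_sq _

/-- The infinitesimal motions of `(G, p)`. For `G = ⊤` and affinely spanning `p` these are the
trivial ones. -/
def infinitesimalMotions (p : V → E) : Submodule ℝ (V → E) :=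
  LinearMap.ker (rigidityForm G p)

variable {G}

theorem mem_infinitesimalMotions_iff {p u : V → E} :
    u ∈ infinitesimalMotions G p ↔ ∀ i j, G.Adj i j → ⟪p i - p j, u i - u j⟫ = 0 := by
  refine ⟨fun h i j hij ↦ congrFun h ⟨s(i, j), hij⟩, fun h ↦ ?_⟩
  ext ⟨e, he⟩
  induction e with
  | _ i j => exact h i j he

theorem exists_skew_map_of_mem_infinitesimalMotions_top {p u : V → E}
    (hspan : affineSpan ℝ (Set.range p) = ⊤) (hu : u ∈ infinitesimalMotions ⊤ p) :
    ∃ A : E →ₗ[ℝ] E, (∀ x, ⟪x, A x⟫ = 0) ∧ ∀ i j, A (p i - p j) = u i - u j := by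
  have hzero (i j) : ⟪p i - p j, u i - u j⟫ = 0 := by
    by_cases hij : i = j
    · simp [hij]
    · exact mem_infinitesimalMotions_iff.1 hu i j hij
  obtain ⟨_, k, rfl⟩ : (Set.range p).Nonempty := by
    rw [← affineSpan_nonempty ℝ, hspan]
    exact ⟨0, trivial⟩
  have hpolar (i j) : ⟪p i - p k, u j - u k⟫ + ⟪p j - p k, u i - u k⟫ = 0 := by
    have hij := hzero i j
    have hik := hzero i k
    have hjk := hzero j k
    simp only [inner_sub_left, inner_sub_right] at *
    linarith
  have hspan_sub : Submodule.span ℝ (Set.range fun i ↦ p i - p k) = ⊤ :=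
    (vectorSpan_range_eq_span_range_vsub_right ℝ p k).symm.trans
      (AffineSubspace.vectorSpan_eq_top_of_affineSpan_eq_top ℝ E E hspan)
  obtain ⟨A, hskew, hA⟩ := exists_skew_map_of_inner_add_inner_eq_zero
    hspan_sub hpolar
  refine ⟨A, hskew, fun i j ↦ ?_⟩
  rw [← sub_sub_sub_cancel_right (p i) (p j) (p k), map_sub, hA, hA, sub_sub_sub_cancel_right]

/-- The velocities at `p` of the infinitesimal isometry `x ↦ A x + b`. -/
def affineVelocity (p : V → E) : (E →ₗ[ℝ] E) × E →ₗ[ℝ] V → E :=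
  LinearMap.pi fun i ↦ (LinearMap.applyₗ (p i)).coprod LinearMap.id

@[simp]
theorem affineVelocity_apply (p : V → E) (A : E →ₗ[ℝ] E) (b : E) (i : V) :
    affineVelocity p (A, b) i = A (p i) + b := rfl

theorem exists_affineVelocity_eq_of_mem_symmetricMaps {σ : V → V} (hσ : Involutive σ)
    {C : E →ₗ[ℝ] E} {p u : V → E} (hspan : affineSpan ℝ (Set.range p) = ⊤)
    (hp : p ∈ symmetricMaps σ C) (hu : u ∈ symmetricMaps σ C)
    (hmotion : u ∈ infinitesimalMotions ⊤ p) :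
    ∃ A ∈ commutingSkewMaps C, ∃ b ∈ End.eigenspace C 1, affineVelocity p (A, b) = u := by
  rw [mem_symmetricMaps_iff hσ] at hp hu
  obtain ⟨A, hskew, hA⟩ := exists_skew_map_of_mem_infinitesimalMotions_top hspan hmotion
  have hcomm : A ∘ₗ C = C ∘ₗ A := by
    refine LinearMap.ext_on (s := Set.range p -ᵥ Set.range p)
      (AffineSubspace.vectorSpan_eq_top_of_affineSpan_eq_top ℝ E E hspan) ?_
    rintro _ ⟨_, ⟨i, rfl⟩, _, ⟨j, rfl⟩, rfl⟩
    simp only [LinearMap.comp_apply, vsub_eq_sub, hA, map_sub C, hp, hu]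
  obtain ⟨_, k, rfl⟩ : (Set.range p).Nonempty := by
    rw [← affineSpan_nonempty ℝ, hspan]
    exact ⟨0, trivial⟩
  have hconst (i) : u i - A (p i) = u k - A (p k) := by
    rw [sub_eq_sub_iff_sub_eq_sub, ← hA, map_sub]
  refine ⟨A, ⟨hskew, LinearMap.congr_fun hcomm⟩, u k - A (p k), ?_, funext fun i ↦ ?_⟩
  · have hCA : C (A (p k)) = A (p (σ k)) := by rw [← hp, ← C.comp_apply, ← hcomm]; rfl
    rw [End.mem_eigenspace_iff, one_smul, map_sub, hu, hCA, hconst]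
  · rw [affineVelocity_apply, ← hconst i, add_sub_cancel]

theorem finrank_symmetricMaps_inf_infinitesimalMotions_top_le [FiniteDimensional ℝ E]
    {σ : V → V} (hσ : Involutive σ) {C : E →ₗᵢ[ℝ] E} (hC : Involutive C) {p : V → E}
    (hspan : affineSpan ℝ (Set.range p) = ⊤) (hp : p ∈ symmetricMaps σ C.toLinearMap) :
    finrank ℝ ↥(symmetricMaps σ C.toLinearMap ⊓ infinitesimalMotions ⊤ p) ≤
      (finrank ℝ (End.eigenspace C.toLinearMap 1) + 1).choose 2 +
        (finrank ℝ (End.eigenspace C.toLinearMap (-1))).choose 2 := by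
  let velocity : commutingSkewMaps C.toLinearMap × End.eigenspace C.toLinearMap 1 →ₗ[ℝ] V → E :=
    affineVelocity p ∘ₗ (Submodule.subtype _).prodMap (Submodule.subtype _)
  have hle : symmetricMaps σ C.toLinearMap ⊓ infinitesimalMotions ⊤ p ≤
      LinearMap.range velocity := by
    rintro u ⟨hu, hmotion⟩
    obtain ⟨A, hA, b, hb, rfl⟩ :=
      exists_affineVelocity_eq_of_mem_symmetricMaps hσ hspan hp hu hmotion
    exact ⟨(⟨A, hA⟩, ⟨b, hb⟩), rfl⟩
  calc _ ≤ finrank ℝ (LinearMap.range velocity) := Submodule.finrank_mono hle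
    _ ≤ finrank ℝ (commutingSkewMaps C.toLinearMap) +
          finrank ℝ (End.eigenspace C.toLinearMap 1) :=
      (LinearMap.finrank_range_le velocity).trans_eq finrank_prod
    _ ≤ _ := by
      have := finrank_commutingSkewMaps_le hC
      rw [Nat.choose_succ_succ' _ 1, Nat.choose_one_right]
      lia

end Rigidity

section SelfStress

variable {V E : Type*} [NormedAddCommGroup E] [InnerProductSpace ℝ E] (G : SimpleGraph V)

theorem sum_incidenceFinset_eq_sum_neighborFinset {M : Type*} [AddCommMonoid M] [DecidableEq V]
    (i : V) [Fintype (G.neighborSet i)] (f : Sym2 V → M) :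
    ∑ e ∈ G.incidenceFinset i, f e = ∑ j ∈ G.neighborFinset i, f s(i, j) := by
  have himage : G.incidenceFinset i = (G.neighborFinset i).image (s(i, ·)) := by
    ext e
    simp only [SimpleGraph.mem_incidenceFinset, mem_image, SimpleGraph.mem_neighborFinset]
    refine ⟨fun ⟨he, hi⟩ ↦ ?_, ?_⟩
    · obtain ⟨j, rfl⟩ := hi
      exact ⟨j, he, rfl⟩
    · rintro ⟨j, hij, rfl⟩
      exact ⟨hij, Sym2.mem_mk_left i j⟩
  rw [himage, sum_image fun j _ k _ hjk ↦ Sym2.congr_right.1 hjk]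

variable [Fintype V] [DecidableRel G.Adj]

/-- `ω` is a self-stress of the framework `(G, p)`; only its values on edges of `G` matter. -/
def IsSelfStress (p : V → E) (ω : Sym2 V → ℝ) : Prop :=
  ∀ i, ∑ j ∈ G.neighborFinset i, ω s(i, j) • (p i - p j) = 0

variable {G}

theorem isSelfStress_of_sum_mul_rigidityForm_eq_zero {p : V → E} {ω : Sym2 V → ℝ}
    (hω : ∀ u, ∑ e : G.edgeSet, ω e * rigidityForm G p u e = 0) : IsSelfStress G p ω := by
  refine fun i ↦ ext_inner_right ℝ fun v ↦ ?_
  calc ⟪∑ j ∈ G.neighborFinset i, ω s(i, j) • (p i - p j), v⟫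
      = ∑ j ∈ G.neighborFinset i, ω s(i, j) * edgeForm s(i, j) p (Pi.single i v) := by
        rw [sum_inner]
        refine sum_congr rfl fun j hj ↦ ?_
        have hji : j ≠ i := ((G.mem_neighborFinset i j).1 hj).ne'
        simp [real_inner_smul_left, hji]
    _ = ∑ e ∈ G.edgeFinset, ω e * edgeForm e p (Pi.single i v) := by
        rw [← sum_incidenceFinset_eq_sum_neighborFinset G i
          fun e ↦ ω e * edgeForm e p (Pi.single i v)]
        refine sum_subset (G.incidenceFinset_subset i) fun e he hei ↦ ?_
        rw [edgeForm_single_eq_zero (fun hi ↦ hei ?_), mul_zero]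
        rw [G.incidenceFinset_eq_filter]
        exact mem_filter.2 ⟨he, hi⟩
    _ = ⟪0, v⟫ := by
        rw [inner_zero_left, ← hω (Pi.single i v)]
        exact sum_set_coe G.edgeSet (f := fun e ↦ ω e * edgeForm e p (Pi.single i v)) |>.symm

end SelfStress

theorem surjective_of_forall_dotProduct_eq_zero {ι M : Type*} [Fintype ι] [AddCommGroup M]
    [Module ℝ M] {W : Submodule ℝ (ι → ℝ)} (L : M →ₗ[ℝ] W)
    (hL : ∀ ω ∈ W, (∀ x, ω ⬝ᵥ (L x : ι → ℝ) = 0) → ω = 0) : Surjective L := by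
  let dot : LinearMap.BilinForm ℝ W := LinearMap.BilinForm.restrict (dotProductBilin ℝ ℝ) W
  have hdot_self (ω : W) (hω : dot ω ω = 0) : ω = 0 := Subtype.ext (dotProduct_self_eq_zero.1 hω)
  have hdot : dot.Nondegenerate :=
    ⟨fun ω hω ↦ hdot_self ω (hω ω), fun ω hω ↦ hdot_self ω (hω ω)⟩
  rw [← LinearMap.range_eq_top]
  by_contra hrange
  obtain ⟨φ, hφ, hle⟩ := Submodule.exists_le_ker_of_lt_top _ (lt_top_iff_ne_top.2 hrange)
  refine hφ ((LinearEquiv.map_eq_zero_iff (dot.toDual hdot).symm).1 (Subtype.ext ?_))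
  refine hL _ (Subtype.property _) fun x ↦ ?_
  exact (LinearMap.BilinForm.apply_toDual_symm_apply (hB := hdot) φ (L x)).trans
    (hle (LinearMap.mem_range_self L x))

section SymmetricRigidity

variable {V E : Type*} [NormedAddCommGroup E] [InnerProductSpace ℝ E] {G : SimpleGraph V}
  {σ : G ≃g G} {C : E →ₗᵢ[ℝ] E}

theorem mapEdgeSet_involutive (hσ : Involutive σ) : Involutive σ.mapEdgeSet := by
  rintro ⟨e, he⟩
  refine Subtype.ext ?_
  change (e.map σ).map σ = e
  rw [Sym2.map_map, hσ.comp_self, Sym2.map_id, id]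

theorem rigidityForm_twist (p u : V → E) (e : G.edgeSet) :
    rigidityForm G (twist σ C.toLinearMap p) (twist σ C.toLinearMap u) e =
      rigidityForm G p u (σ.mapEdgeSet e) :=
  edgeForm_twist σ C e p u

theorem rigidityForm_mem_symmetricMaps {p u : V → E} (hp : p ∈ symmetricMaps σ C.toLinearMap)
    (hu : u ∈ symmetricMaps σ C.toLinearMap) :
    rigidityForm G p u ∈ symmetricMaps σ.mapEdgeSet LinearMap.id := by
  rw [mem_symmetricMaps_iff_twist_eq] at hp hu ⊢
  ext e
  rw [twist_apply, LinearMap.id_apply, ← rigidityForm_twist, hp, hu]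

variable (σ C) in
/-- The rigidity form restricted to symmetric configurations; its values are symmetric functions
on the edges. -/
def symmetricRigidityForm :
    symmetricMaps σ C.toLinearMap →ₗ[ℝ] symmetricMaps σ C.toLinearMap →ₗ[ℝ]
      symmetricMaps σ.mapEdgeSet (LinearMap.id : ℝ →ₗ[ℝ] ℝ) :=
  LinearMap.mk₂ ℝ (fun p u ↦ ⟨rigidityForm G p.1 u.1, rigidityForm_mem_symmetricMaps p.2 u.2⟩)
    (fun _ _ _ ↦ Subtype.ext (LinearMap.map_add₂ _ _ _ _))
    (fun _ _ _ ↦ Subtype.ext (LinearMap.map_smul₂ _ _ _ _))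
    (fun _ _ _ ↦ Subtype.ext (map_add _ _ _)) (fun _ _ _ ↦ Subtype.ext (map_smul _ _ _))

@[simp]
theorem coe_symmetricRigidityForm (p u : symmetricMaps σ C.toLinearMap) :
    (symmetricRigidityForm σ C p u : G.edgeSet → ℝ) = rigidityForm G p.1 u.1 := rfl

theorem symmetricRigidityForm_comm (p u : symmetricMaps σ C.toLinearMap) :
    symmetricRigidityForm σ C p u = symmetricRigidityForm σ C u p :=
  Subtype.ext (funext fun e ↦ edgeForm_comm (e : Sym2 V) p.1 u.1)

theorem symmetricRigidityForm_eq_zero_iff {p u : symmetricMaps σ C.toLinearMap} :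
    symmetricRigidityForm σ C p u = 0 ↔ u.1 ∈ infinitesimalMotions G p.1 :=
  Submodule.coe_eq_zero.symm

theorem finrank_symmetricMaps_le [Finite V] [FiniteDimensional ℝ E] {p : V → E}
    (hp : p ∈ symmetricMaps σ C.toLinearMap) :
    finrank ℝ (symmetricMaps σ C.toLinearMap) ≤
      finrank ℝ (symmetricMaps σ.mapEdgeSet (LinearMap.id : ℝ →ₗ[ℝ] ℝ)) +
        finrank ℝ ↥(symmetricMaps σ C.toLinearMap ⊓ infinitesimalMotions G p) := by
  have hker : (LinearMap.ker (symmetricRigidityForm σ C ⟨p, hp⟩)).map (Submodule.subtype _) =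
      symmetricMaps σ C.toLinearMap ⊓ infinitesimalMotions G p := by
    ext u
    simp [symmetricRigidityForm_eq_zero_iff, and_comm]
  rw [← hker, Submodule.finrank_map_subtype_eq,
    ← LinearMap.finrank_range_add_finrank_ker (symmetricRigidityForm σ C ⟨p, hp⟩)]
  gcongr
  exact Submodule.finrank_le _

theorem dotProduct_rigidityForm_twist [Fintype G.edgeSet] {p : V → E}
    (hp : p ∈ symmetricMaps σ C.toLinearMap) {ω : G.edgeSet → ℝ}
    (hω : ω ∈ symmetricMaps σ.mapEdgeSet LinearMap.id) (u : V → E) :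
    ω ⬝ᵥ rigidityForm G p (twist σ C.toLinearMap u) = ω ⬝ᵥ rigidityForm G p u := by
  rw [mem_symmetricMaps_iff_twist_eq] at hp hω
  refine Fintype.sum_equiv σ.mapEdgeSet _ _ fun e ↦ ?_
  rw [← rigidityForm_twist, hp]
  congr 1
  exact (congrFun hω e).symm

variable [Fintype V] [DecidableRel G.Adj]

theorem surjective_symmetricRigidityForm (hσ : Involutive σ) (hC : Involutive C)
    (p : symmetricMaps σ C.toLinearMap)
    (hstress : ∀ ω : Sym2 V → ℝ, IsSelfStress G p.1 ω →
      (∀ e ∈ G.edgeSet, ω (e.map σ) = ω e) → ∀ e ∈ G.edgeSet, ω e = 0) :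
    Surjective (symmetricRigidityForm σ C p) := by
  refine surjective_of_forall_dotProduct_eq_zero _ fun ω hω horth ↦ ?_
  have hzero (u : V → E) : ω ⬝ᵥ rigidityForm G p.1 u = 0 := by
    have hsum := horth ⟨u + twist σ C.toLinearMap u, add_twist_mem_symmetricMaps hσ hC u⟩
    rw [coe_symmetricRigidityForm, map_add, dotProduct_add,
      dotProduct_rigidityForm_twist p.2 hω] at hsum
    linarith
  let ω' : Sym2 V → ℝ := Function.extend Subtype.val ω 0
  have hext (e : G.edgeSet) : ω' e = ω e := Subtype.val_injective.extend_apply ω 0 e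
  have hself : IsSelfStress G p.1 ω' :=
    isSelfStress_of_sum_mul_rigidityForm_eq_zero fun u ↦
      (sum_congr rfl fun e _ ↦ by rw [hext]).trans (hzero u)
  have hsymm (e) (he : e ∈ G.edgeSet) : ω' (e.map σ) = ω' e := by
    rw [mem_symmetricMaps_iff_twist_eq] at hω
    exact (hext (σ.mapEdgeSet ⟨e, he⟩)).trans ((congrFun hω ⟨e, he⟩).trans (hext ⟨e, he⟩).symm)
  ext e
  rw [← hext e]
  exact hstress ω' hself hsymm e e.2

theorem two_mul_finrank_symmetricMaps_mapEdgeSet [DecidableEq V] (hσ : Involutive σ) :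
    2 * finrank ℝ (symmetricMaps σ.mapEdgeSet (LinearMap.id : ℝ →ₗ[ℝ] ℝ)) =
      #G.edgeFinset + #{e ∈ G.edgeFinset | e.map σ = e} := by
  have hfixed : #{e : G.edgeSet | σ.mapEdgeSet e = e} = #{e ∈ G.edgeFinset | e.map σ = e} := by
    refine card_nbij Subtype.val (fun e he ↦ ?_) Subtype.val_injective.injOn fun e he ↦ ?_
    · have he_fixed : σ.mapEdgeSet e = e := (mem_filter.1 he).2
      exact mem_filter.2 ⟨G.mem_edgeFinset.2 e.2, congrArg Subtype.val he_fixed⟩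
    · obtain ⟨he_edge, he_fixed⟩ := mem_filter.1 he
      refine ⟨⟨e, G.mem_edgeFinset.1 he_edge⟩, mem_filter.2 ⟨mem_univ _, ?_⟩, rfl⟩
      exact Subtype.ext he_fixed
  have htwo := two_mul_finrank_symmetricMaps (mapEdgeSet_involutive hσ)
    (C := (LinearMap.id : ℝ →ₗ[ℝ] ℝ)) fun _ ↦ rfl
  rw [LinearMap.trace_id, finrank_self, Nat.cast_one, mul_one, mul_one, hfixed,
    ← G.edgeFinset_card] at htwo
  exact_mod_cast htwo

end SymmetricRigidity

section Flex

variable {M N : Type*} [NormedAddCommGroup M] [NormedSpace ℝ M] [FiniteDimensional ℝ M]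
  [NormedAddCommGroup N] [NormedSpace ℝ N]

theorem hasStrictFDerivAt_bilinear_self {B : M →ₗ[ℝ] M →ₗ[ℝ] N} (hB : ∀ x y, B x y = B y x)
    (a : M) : HasStrictFDerivAt (fun x ↦ B x x) ((2 : ℝ) • (B a).toContinuousLinearMap) a := by
  have hbilin := B.toContinuousBilinearMap.hasStrictFDerivAt_of_bilinear
    (hasStrictFDerivAt_id a) (hasStrictFDerivAt_id a)
  refine hbilin.congr_fderiv (ContinuousLinearMap.ext fun u ↦ ?_)
  simp [hB u a, two_smul]

variable [FiniteDimensional ℝ N]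

theorem exists_curve_of_hasStrictFDerivAt {f : M → N} {f' : M →L[ℝ] N} {a u : M}
    (hf : HasStrictFDerivAt f f' a) (hsurj : Surjective f') (hu : f' u = 0) :
    ∃ γ : ℝ → M, γ 0 = a ∧ HasDerivAt γ u 0 ∧
      ∃ s ∈ 𝓝 (0 : ℝ), ContinuousOn γ s ∧ ∀ t ∈ s, f (γ t) = f a := by
  have : CompleteSpace M := FiniteDimensional.complete ℝ M
  have hrange : f'.range = ⊤ := LinearMap.range_eq_top.2 hsurj
  let g := hf.implicitFunction f f' hrange (f a)
  let line : ℝ → f'.ker := fun t ↦ t • ⟨u, hu⟩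
  have hline_zero : line 0 = 0 := zero_smul _ _
  have hline : HasDerivAt line ⟨u, hu⟩ 0 := by
    simpa using (hasDerivAt_id (0 : ℝ)).smul_const (⟨u, hu⟩ : f'.ker)
  have hline_tendsto : Tendsto line (𝓝 0) (𝓝 0) := hline_zero ▸ hline.continuousAt.tendsto
  have hg : HasStrictFDerivAt g f'.ker.subtypeL (line 0) :=
    hline_zero ▸ hf.to_implicitFunction hrange
  obtain ⟨K, s, hs, hlip⟩ := hg.exists_lipschitzOnWith
  have hlevel : ∀ᶠ t in 𝓝 0, f (g (line t)) = f a :=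
    (tendsto_const_nhds.prodMk_nhds hline_tendsto).eventually (hf.map_implicitFunction_eq hrange)
  refine ⟨g ∘ line, ?_, hg.hasFDerivAt.comp_hasDerivAt 0 hline,
    line ⁻¹' s ∩ {t | f (g (line t)) = f a},
    inter_mem (hline.continuousAt.preimage_mem_nhds hs) hlevel, ?_, fun t ht ↦ ht.2⟩
  · simp [g, hline_zero]
  · have hline_cont : Continuous line := continuous_id.smul continuous_const
    exact hlip.continuousOn.comp hline_cont.continuousOn fun t ht ↦ ht.1

theorem exists_curve_of_bilinear {B : M →ₗ[ℝ] M →ₗ[ℝ] N} (hB : ∀ x y, B x y = B y x) {a u : M}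
    (hsurj : Surjective (B a)) (hu : B a u = 0) :
    ∃ γ : ℝ → M, γ 0 = a ∧ HasDerivAt γ u 0 ∧
      ∃ s ∈ 𝓝 (0 : ℝ), ContinuousOn γ s ∧ ∀ t ∈ s, B (γ t) (γ t) = B a a := by
  refine exists_curve_of_hasStrictFDerivAt (hasStrictFDerivAt_bilinear_self hB a) (fun y ↦ ?_) ?_
  · obtain ⟨x, hx⟩ := hsurj ((2 : ℝ)⁻¹ • y)
    exact ⟨x, by simp [hx]⟩
  · simp [hu]

variable {V E : Type*} [NormedAddCommGroup E] [InnerProductSpace ℝ E]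

theorem eventually_norm_sub_ne_of_hasDerivAt {γ : ℝ → V → E} {u : V → E} {k l : V}
    (hγ : HasDerivAt γ u 0) (hkl : ⟪γ 0 k - γ 0 l, u k - u l⟫ ≠ 0) :
    ∀ᶠ t in 𝓝[≠] 0, ‖γ t k - γ t l‖ ≠ ‖γ 0 k - γ 0 l‖ := by
  rw [hasDerivAt_pi] at hγ
  have hnorm_sq := ((hγ k).sub (hγ l)).norm_sq
  filter_upwards [hnorm_sq.eventually_ne (c := ‖γ 0 k - γ 0 l‖ ^ 2) (by simpa using hkl)]
    with t ht heq
  exact ht (congrArg (· ^ 2) heq)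

/-- `P` is a finite flex of the framework `(G, p)` in which every configuration `P t`, `t ∈ [0, 1]`,
satisfies `C ∘ P t = P t ∘ σ`. -/
structure IsSymmetricFlex (G : SimpleGraph V) (σ : V → V) (C : E → E) (p : V → E)
    (P : ℝ → V → E) : Prop where
  continuousOn : ContinuousOn P (Set.Icc 0 1)
  map_zero : P 0 = p
  norm_eq : ∀ t ∈ Set.Icc (0 : ℝ) 1, ∀ i j, G.Adj i j → ‖P t i - P t j‖ = ‖p i - p j‖
  exists_norm_ne : ∃ k l, ∀ t ∈ Set.Ioc (0 : ℝ) 1, ‖P t k - P t l‖ ≠ ‖p k - p l‖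
  symmetric : ∀ t ∈ Set.Icc (0 : ℝ) 1, ∀ i, C (P t i) = P t (σ i)

variable [FiniteDimensional ℝ E] {G : SimpleGraph V} {σ : G ≃g G} {C : E →ₗᵢ[ℝ] E}

theorem exists_isSymmetricFlex_of_surjective [Finite V] (hσ : Involutive σ)
    {p u : symmetricMaps σ C.toLinearMap} (hsurj : Surjective (symmetricRigidityForm σ C p))
    (hu : u.1 ∈ infinitesimalMotions G p.1) (hnontrivial : u.1 ∉ infinitesimalMotions ⊤ p.1) :
    ∃ P, IsSymmetricFlex G σ C p.1 P := by
  cases nonempty_fintype V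
  obtain ⟨γ, hγ_zero, hγ, s, hs, hγ_cont, hγ_level⟩ := exists_curve_of_bilinear
    symmetricRigidityForm_comm hsurj (symmetricRigidityForm_eq_zero_iff.2 hu)
  obtain ⟨k, l, -, hkl⟩ : ∃ k l, (⊤ : SimpleGraph V).Adj k l ∧
      ⟪p.1 k - p.1 l, u.1 k - u.1 l⟫ ≠ 0 := by
    simpa only [mem_infinitesimalMotions_iff, not_forall, exists_prop] using hnontrivial
  have hne : ∀ᶠ t in 𝓝[≠] 0, ‖(γ t).1 k - (γ t).1 l‖ ≠ ‖(γ 0).1 k - (γ 0).1 l‖ :=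
    eventually_norm_sub_ne_of_hasDerivAt
      ((Submodule.subtypeL _).hasFDerivAt.comp_hasDerivAt 0 hγ) (by simpa [hγ_zero] using hkl)
  rw [hγ_zero] at hne
  obtain ⟨ε, hε, hsub⟩ := mem_nhdsGT_iff_exists_Ioc_subset.1
    (inter_mem (mem_nhdsWithin_of_mem_nhds hs) (nhdsGT_le_nhdsNE 0 hne))
  have hIoc {t : ℝ} (ht : t ∈ Set.Ioc 0 1) : ε * t ∈ Set.Ioc 0 ε :=
    ⟨mul_pos hε ht.1, mul_le_of_le_one_right hε.le ht.2⟩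
  have hmem {t : ℝ} (ht : t ∈ Set.Icc 0 1) : ε * t ∈ s := by
    rcases ht.1.eq_or_lt with rfl | hpos
    · simpa using mem_of_mem_nhds hs
    · exact (hsub (hIoc ⟨hpos, ht.2⟩)).1
  refine ⟨fun t ↦ (γ (ε * t)).1, ?_, by simp [hγ_zero], fun t ht i j hij ↦ ?_,
    ⟨k, l, fun t ht ↦ (hsub (hIoc ht)).2⟩, fun t _ ↦ (mem_symmetricMaps_iff hσ).1 (γ (ε * t)).2⟩
  · exact continuous_subtype_val.comp_continuousOn
      (hγ_cont.comp (continuous_const_mul ε).continuousOn fun t ht ↦ hmem ht)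
  · have hsq := congrFun (congrArg Subtype.val (hγ_level _ (hmem ht))) ⟨s(i, j), hij⟩
    simp only [coe_symmetricRigidityForm, rigidityForm_self_mk] at hsq
    exact (sq_eq_sq₀ (norm_nonneg _) (norm_nonneg _)).1 hsq

variable [Fintype V] [DecidableEq V] [DecidableRel G.Adj]

theorem exists_symmetric_nontrivial_infinitesimalMotion (hσ : Involutive σ) (hC : Involutive C)
    {f g : ℕ} (hf : finrank ℝ (End.eigenspace C.toLinearMap 1) = f)
    (hg : finrank ℝ (End.eigenspace C.toLinearMap (-1)) = g)
    (hcount : #G.edgeFinset + #{e ∈ G.edgeFinset | e.map σ = e} +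
        2 * ((f + 1).choose 2 + g.choose 2) + g * #{i | σ i = i} <
      finrank ℝ E * Fintype.card V + f * #{i | σ i = i})
    {p : V → E} (hp : p ∈ symmetricMaps σ C.toLinearMap)
    (hspan : affineSpan ℝ (Set.range p) = ⊤) :
    ∃ u ∈ symmetricMaps σ C.toLinearMap,
      u ∈ infinitesimalMotions G p ∧ u ∉ infinitesimalMotions ⊤ p := by
  by_contra! hall
  have hconfigs : 2 * finrank ℝ (symmetricMaps σ C.toLinearMap) + g * #{i | σ i = i} =
      finrank ℝ E * Fintype.card V + f * #{i | σ i = i} := by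
    have htwo := two_mul_finrank_symmetricMaps (C := C.toLinearMap) hσ hC
    rw [trace_eq_finrank_eigenspace_one_sub hC, hf, hg] at htwo
    have : (2 * finrank ℝ (symmetricMaps σ C.toLinearMap) + g * #{i | σ i = i} : ℝ) =
        finrank ℝ E * Fintype.card V + f * #{i | σ i = i} := by linarith
    exact_mod_cast this
  have hedges := two_mul_finrank_symmetricMaps_mapEdgeSet hσ
  have hrank := finrank_symmetricMaps_le (G := G) hp
  have hle : symmetricMaps σ C.toLinearMap ⊓ infinitesimalMotions G p ≤
      symmetricMaps σ C.toLinearMap ⊓ infinitesimalMotions ⊤ p :=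
    fun u hu ↦ ⟨hu.1, hall u hu.1 hu.2⟩
  have hmotions := Submodule.finrank_mono hle
  have htrivial := finrank_symmetricMaps_inf_infinitesimalMotions_top_le hσ hC hspan hp
  rw [hf, hg] at htrivial
  lia

end Flex

theorem eigenspace_one_eq_fixedSpace {d : ℕ} (C : Euc d ≃ₗᵢ[ℝ] Euc d) :
    End.eigenspace C.toLinearIsometry.toLinearMap 1 = fixedSpace C := by
  ext x
  simp [fixedSpace, sub_eq_zero]

theorem finrank_fixedSpace_add_finrank_eigenspace_neg_one {d : ℕ} {C : Euc d ≃ₗᵢ[ℝ] Euc d}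
    (hC : Involutive C) :
    finrank ℝ (fixedSpace C) + finrank ℝ (End.eigenspace C.toLinearIsometry.toLinearMap (-1)) =
      d := by
  rw [← eigenspace_one_eq_fixedSpace, finrank_eigenspace_one_add_finrank_eigenspace_neg_one
    (T := C.toLinearIsometry.toLinearMap) hC, finrank_euclideanSpace_fin]

/-- Half of `hcount` is the inequality `dim W + t < dim U` for the symmetric configurations `U`, the
symmetric functions `W` on edges and the dimension bound `t` for symmetric trivial motions. -/
theorem stmt_7_general {V E : Type*} [Fintype V] [DecidableEq V] [NormedAddCommGroup E]
    [InnerProductSpace ℝ E] [FiniteDimensional ℝ E] (G : SimpleGraph V) [DecidableRel G.Adj]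
    (C : E →ₗᵢ[ℝ] E) (hC : Involutive C) (σ : G ≃g G) (hσ : Involutive σ)
    {f g : ℕ} (hf : finrank ℝ (End.eigenspace C.toLinearMap 1) = f)
    (hg : finrank ℝ (End.eigenspace C.toLinearMap (-1)) = g)
    (hcount : #G.edgeFinset + #{e ∈ G.edgeFinset | e.map σ = e} +
        2 * ((f + 1).choose 2 + g.choose 2) + g * #{i | σ i = i} <
      finrank ℝ E * Fintype.card V + f * #{i | σ i = i})
    (p : V → E) (hp : ∀ i, C (p i) = p (σ i)) (hspan : affineSpan ℝ (Set.range p) = ⊤)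
    (hstress : ∀ ω : Sym2 V → ℝ, IsSelfStress G p ω →
      (∀ e ∈ G.edgeSet, ω (e.map σ) = ω e) → ∀ e ∈ G.edgeSet, ω e = 0) :
    ∃ P, IsSymmetricFlex G σ C p P := by
  have hp_mem : p ∈ symmetricMaps σ C.toLinearMap := (mem_symmetricMaps_iff hσ).2 hp
  obtain ⟨u, hu_mem, hu, hnontrivial⟩ :=
    exists_symmetric_nontrivial_infinitesimalMotion hσ hC hf hg hcount hp_mem hspan
  have hsurj := surjective_symmetricRigidityForm hσ hC ⟨p, hp_mem⟩ hstress
  exact exists_isSymmetricFlex_of_surjective hσ (u := ⟨u, hu_mem⟩) hsurj hu hnontrivial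

/-- Theorem 6.7, mirror symmetry in 3-space: `s ∈ O(3)` a
reflection (orthogonal involution with 2-dimensional fixed subspace),
`S = {I, s}`, `Φ(s) = σ` with `j_s > b_s` (more fixed vertices than fixed
edges), `|E| = 3|V| - 6`; then a symmetric framework spanning `ℝ³` with no
nonzero fully symmetric self-stress has a symmetry-preserving finite flex. -/
theorem stmt_7 {V : Type*} [Fintype V] [DecidableEq V]
    (G : SimpleGraph V) [DecidableRel G.Adj]
    (hcount : G.edgeFinset.card + 6 = 3 * Fintype.card V)
    (C : Euc 3 ≃ₗᵢ[ℝ] Euc 3) (hC2 : ∀ v, C (C v) = v)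
    (hrefl : Module.finrank ℝ (fixedSpace C) = 2)
    (σ : Equiv.Perm V) (hσ2 : σ * σ = 1)
    (hσadj : ∀ i j : V, G.Adj (σ i) (σ j) ↔ G.Adj i j)
    (hjb : (G.edgeFinset.filter (fun e => Sym2.map σ e = e)).card <
      (Finset.univ.filter (fun i : V => σ i = i)).card)
    (p : V → Euc 3) (hp : Function.Injective p)
    (hsym : ∀ i, C (p i) = p (σ i))
    (hspan : affineSpan ℝ (Set.range p) = ⊤)
    (hnostress : ∀ ω : Sym2 V → ℝ,
      (∀ i : V, ∑ j ∈ G.neighborFinset i, ω s(i, j) • (p i - p j) = 0) →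
      (∀ e ∈ G.edgeSet, ω (Sym2.map σ e) = ω e) →
      ∀ e ∈ G.edgeSet, ω e = 0) :
    ∃ P : ℝ → V → Euc 3,
      ContinuousOn P (Set.Icc 0 1) ∧
      P 0 = p ∧
      (∀ t ∈ Set.Icc (0:ℝ) 1, ∀ i j : V, G.Adj i j → ‖P t i - P t j‖ = ‖p i - p j‖) ∧
      (∃ k l : V, ∀ t ∈ Set.Ioc (0:ℝ) 1, ‖P t k - P t l‖ ≠ ‖p k - p l‖) ∧
      (∀ t ∈ Set.Icc (0:ℝ) 1, ∀ i, C (P t i) = P t (σ i)) := by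
  have hpos : finrank ℝ (End.eigenspace C.toLinearIsometry.toLinearMap 1) = 2 := by
    rw [eigenspace_one_eq_fixedSpace, hrefl]
  have hneg : finrank ℝ (End.eigenspace C.toLinearIsometry.toLinearMap (-1)) = 1 := by
    linarith [finrank_fixedSpace_add_finrank_eigenspace_neg_one hC2]
  have hcount_symm : #G.edgeFinset + #{e ∈ G.edgeFinset | e.map σ = e} +
      2 * (Nat.choose 3 2 + Nat.choose 1 2) + 1 * #{i | σ i = i} <
        finrank ℝ (Euc 3) * Fintype.card V + 2 * #{i | σ i = i} := by
    rw [finrank_euclideanSpace_fin, show Nat.choose 3 2 + Nat.choose 1 2 = 3 from rfl]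
    linarith
  obtain ⟨P, hP⟩ := stmt_7_general G C.toLinearIsometry hC2 ⟨σ, hσadj _ _⟩
    (Equiv.Perm.ext_iff.1 hσ2) hpos hneg hcount_symm p hsym hspan hnostress
  exact ⟨P, hP.continuousOn, hP.map_zero, hP.norm_eq, hP.exists_norm_ne, hP.symmetric⟩
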